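/- arXiv:1902.01139 — 2 statements merged into one kernel-verified Lean document; each statement's English description precedes it below -/
import Mathlib

section
/- Correctness of adaptive discrimination trees: let M be a Mealy machine and let T be a verified adaptive discrimination tree over I, O whose leaves are labelled with representative words rep_f ∈ I*. Then any two distinct leaves f₁ ≠ f₂ of T represent distinct equivalence classes of M: ¬(rep_{f₁} ≡_{P_M} rep_{f₂}). -/
/-- A (complete, deterministic) Mealy machine with state set `S`, input alphabet `I`,
output alphabet `O`, an initial state, a transition function and an output function. -/
structure Mealy (S I O : Type*) where
  init : S
  trans : S → I → S
  out1 : S → I → O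

namespace Mealy

variable {S I O : Type*}

/-- The transition function extended to input words:
`δ(s, ε) = s`, `δ(s, a·w) = δ(δ(s, a), w)`. -/
def transW (M : Mealy S I O) : S → List I → S
  | s, [] => s
  | s, a :: w => M.transW (M.trans s a) w

/-- The output function extended to input words:
`λ(s, ε) = ε`, `λ(s, a·w) = λ(s, a) · λ(δ(s, a), w)`. -/
def outW (M : Mealy S I O) : S → List I → List O
  | _, [] => []
  | s, a :: w => M.out1 s a :: M.outW (M.trans s a) w

/-- The functional `P_M` of a Mealy machine: the last output symbol emitted when
reading `w` from the initial state (`none` exactly on the empty word, which is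
outside the domain `I⁺` of the functional). -/
def func (M : Mealy S I O) (w : List I) : Option O :=
  (M.outW M.init w).getLast?

/-- `u ≡_{P_M} v`: `P_M(u·w) = P_M(v·w)` for every word `w` such that `u·w` is
nonempty. -/
def funcEqv (M : Mealy S I O) (u v : List I) : Prop :=
  ∀ w : List I, u ++ w ≠ [] → M.func (u ++ w) = M.func (v ++ w)

end Mealy

/-- An adaptive discrimination tree (ADT) over alphabets `I`, `O`: a final node
carrying a representative word; a symbol node carrying an input symbol together
with, for each output in a (nonempty) subset of `O`, a child ADT (edges labelled by
these outputs); or a reset node with exactly one child. -/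
inductive ADT (I O : Type*)
  | final (rep : List I) : ADT I O
  | symbol (i : I) (children : O → Option (ADT I O)) : ADT I O
  | reset (child : ADT I O) : ADT I O

/-- `LeafAt t addr cur ts rep`: following the address `addr` in the tree `t`
(`some o` = take the `o`-labelled edge of a symbol node, `none` = descend through a
reset node) one reaches a final node (leaf) with representative word `rep`.  `cur`
is the currently open maximal reset-free segment (input word, output word)
accumulated above `t`, and `ts` is the resulting list of traces of the leaf: the
pairs ⟨input word, output word⟩ of the maximal reset-free segments of its path, in
root-to-leaf order.  The traces of a leaf of the whole tree are obtained with
`cur = (ε, ε)`. -/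
inductive LeafAt {I O : Type*} :
    ADT I O → List (Option O) → List I × List O → List (List I × List O) → List I → Prop
  | final (cur : List I × List O) (rep : List I) :
      LeafAt (.final rep) [] cur [cur] rep
  | symbol {i : I} {ch : O → Option (ADT I O)} {o : O} {c : ADT I O}
      {addr : List (Option O)} {cur : List I × List O}
      {ts : List (List I × List O)} {rep : List I}
      (hc : ch o = some c)
      (h : LeafAt c addr (cur.1 ++ [i], cur.2 ++ [o]) ts rep) :
      LeafAt (.symbol i ch) (some o :: addr) cur ts rep
  | reset {c : ADT I O} {addr : List (Option O)} {cur : List I × List O}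
      {ts : List (List I × List O)} {rep : List I}
      (h : LeafAt c addr ([], []) ts rep) :
      LeafAt (.reset c) (none :: addr) cur (cur :: ts) rep

/-- A verified ADT with respect to `M`: for every leaf `f` and every trace
`⟨i, o⟩ ∈ traces(f)`, we have `λ(δ(s₀, rep_f), i) = o`. -/
def ADT.Verified {S I O : Type*} (M : Mealy S I O) (t : ADT I O) : Prop :=
  ∀ (addr : List (Option O)) (ts : List (List I × List O)) (rep : List I),
    LeafAt t addr ([], []) ts rep →
      ∀ p ∈ ts, M.outW (M.transW M.init rep) p.1 = p.2

theorem Mealy.transW_append' {S I O : Type*} (M : Mealy S I O) (s : S) (u x : List I) :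
    M.transW s (u ++ x) = M.transW (M.transW s u) x := by
  induction u generalizing s with
  | nil => rfl
  | cons a u ih => simp [Mealy.transW, ih]

theorem Mealy.outW_append' {S I O : Type*} (M : Mealy S I O) (s : S) (u x : List I) :
    M.outW s (u ++ x) = M.outW s u ++ M.outW (M.transW s u) x := by
  induction u generalizing s with
  | nil => rfl
  | cons a u ih => simp [Mealy.outW, Mealy.transW, ih]

theorem Mealy.outW_length' {S I O : Type*} (M : Mealy S I O) (s : S) (u : List I) :
    (M.outW s u).length = u.length := by
  induction u generalizing s with
  | nil => rfl
  | cons a u ih => simp [Mealy.outW, ih]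

theorem Mealy.outW_eq_of_eqv {S I O : Type*} (M : Mealy S I O) (u v : List I)
    (h : M.funcEqv u v) (w : List I) :
    M.outW (M.transW M.init u) w = M.outW (M.transW M.init v) w := by
  induction w using List.reverseRecOn with
  | nil => rfl
  | append_singleton w a ih =>
    have h1 := h (w ++ [a]) (by simp)
    simp only [Mealy.func, Mealy.outW_append', ← List.append_assoc, Mealy.outW,
      List.getLast?_append, List.getLast?_singleton, Option.some_or, Option.some.injEq] at h1 
    rw [Mealy.outW_append', Mealy.outW_append', ih]
    simp only [Mealy.outW]
    congr 2
    simpa [Mealy.transW_append'] using h1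

theorem LeafAt.cur_ok {S I O : Type*} (M : Mealy S I O) (q : S) {t : ADT I O}
    {a : List (Option O)} {cur : List I × List O} {ts : List (List I × List O)} {r : List I}
    (h : LeafAt t a cur ts r) (hl : cur.1.length = cur.2.length)
    (hts : ∀ p ∈ ts, M.outW q p.1 = p.2) : M.outW q cur.1 = cur.2 := by
  induction h with
  | final cur rep => exact hts _ (by simp)
  | symbol hc h ih =>
    have := ih (by simp [hl]) hts
    simp only [Mealy.outW_append'] at this
    exact (List.append_inj this (by rw [Mealy.outW_length', hl])).1
  | reset h ih => exact hts _ (by simp)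

theorem LeafAt.addr_eq {S I O : Type*} (M : Mealy S I O) (q : S) {t : ADT I O}
    {a₁ a₂ : List (Option O)} {cur : List I × List O} {ts₁ ts₂ : List (List I × List O)}
    {r₁ r₂ : List I}
    (h₁ : LeafAt t a₁ cur ts₁ r₁) (h₂ : LeafAt t a₂ cur ts₂ r₂)
    (hl : cur.1.length = cur.2.length)
    (ht₁ : ∀ p ∈ ts₁, M.outW q p.1 = p.2) (ht₂ : ∀ p ∈ ts₂, M.outW q p.1 = p.2) :
    a₁ = a₂ := by
  induction h₁ generalizing a₂ ts₂ r₂ with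
  | final cur rep => cases h₂; rfl
  | symbol hc h ih =>
    cases h₂ with
    | symbol hc' h' =>
      have e1 := h.cur_ok M q (by simp [hl]) ht₁
      have e2 := h'.cur_ok M q (by simp [hl]) ht₂
      have e3 := e1.symm.trans e2
      simp only [List.append_cancel_left_eq, List.cons.injEq, and_true] at e3
      subst e3
      rw [hc] at hc'
      cases hc'
      rw [ih h' (by simp [hl]) ht₁ ht₂]
  | reset h ih =>
    cases h₂ with
    | reset h' =>
      rw [ih h' rfl (fun p hp => ht₁ p (List.mem_cons_of_mem _ hp))
        (fun p hp => ht₂ p (List.mem_cons_of_mem _ hp))]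

/-- Correctness of adaptive discrimination trees: in a verified ADT, any two
distinct leaves represent distinct equivalence classes of `M`, i.e. their
representative words are inequivalent under `≡_{P_M}`. -/
theorem adt_correctness {S I O : Type*} [Fintype I] [Fintype O]
    (M : Mealy S I O) (t : ADT I O) (hver : ADT.Verified M t)
    (addr₁ addr₂ : List (Option O)) (ts₁ ts₂ : List (List I × List O))
    (rep₁ rep₂ : List I)
    (h₁ : LeafAt t addr₁ ([], []) ts₁ rep₁)
    (h₂ : LeafAt t addr₂ ([], []) ts₂ rep₂)
    (hne : addr₁ ≠ addr₂) :
    ¬ M.funcEqv rep₁ rep₂ := by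
  intro he
  refine hne (LeafAt.addr_eq M (M.transW M.init rep₁) h₁ h₂ rfl (hver _ _ _ h₁) ?_)
  intro p hp
  rw [Mealy.outW_eq_of_eqv M _ _ he]
  exact hver _ _ _ h₂ p hp
end

section
/- Counterexample decomposition: let M be a Mealy machine (the target) and H a Mealy machine (the hypothesis) over the same alphabets, equipped with an access-sequence map as : S_H → I* such that as(s₀ᴴ) = ε and λ_H(s, i) = P_M(as(s)·i) for every state s ∈ S_H and input symbol i ∈ I. If ĉ ∈ I⁺ is a counterexample in the sense that the last symbol of λ_H(s₀ᴴ, ĉ) differs from P_M(ĉ), then ĉ decomposes as ĉ = u·a·v with u ∈ I*, a ∈ I, v ∈ I⁺ such that P_M(as(δ_H(s₀ᴴ, u))·a·v) ≠ P_M(as(δ_H(s₀ᴴ, u·a))·v); in particular the words as(δ_H(s₀ᴴ, u))·a and as(δ_H(s₀ᴴ, u·a)) are inequivalent under ≡_{P_M}, witnessed by the distinguishing suffix v. -/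
theorem decomp_aux {S SH I O : Type*}
    (M : Mealy S I O) (H : Mealy SH I O) (acc : SH → List I)
    (haccout : ∀ (s : SH) (i : I), M.func (acc s ++ [i]) = some (H.out1 s i))
    (c : List I) : ∀ (s : SH), c ≠ [] →
    (H.outW s c).getLast? ≠ M.func (acc s ++ c) →
    ∃ (u : List I) (a : I) (v : List I),
      c = u ++ a :: v ∧ v ≠ [] ∧
      M.func (acc (H.transW s u) ++ a :: v) ≠
        M.func (acc (H.transW s (u ++ [a])) ++ v) := by
  induction c with
  | nil => intro s h; exact absurd rfl h
  | cons a w ih =>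
    intro s _ hce
    cases w with
    | nil => exact absurd (by rw [haccout]; simp [Mealy.outW]) hce
    | cons b w =>
      by_cases h : M.func (acc s ++ a :: b :: w) = M.func (acc (H.trans s a) ++ b :: w)
      · obtain ⟨u, a', v, h1, h2, h3⟩ := ih (H.trans s a) (by simp) (by
          rw [← h]
          simpa [Mealy.outW] using hce)
        exact ⟨a :: u, a', v, by simp [h1], h2, h3⟩
      · exact ⟨[], a, b :: w, rfl, by simp, h⟩

/-- Counterexample decomposition (Rivest–Schapire): let `M` be the target and `H` a
hypothesis over the same alphabets with an access-sequence map `acc` such that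
`acc(s₀ᴴ) = ε` and `λ_H(s, i) = P_M(acc(s)·i)`.  If `ĉ` is a counterexample, i.e.
the last symbol of `λ_H(s₀ᴴ, ĉ)` differs from `P_M(ĉ)`, then `ĉ = u·a·v` with `v`
nonempty such that `P_M(acc(δ_H(u))·a·v) ≠ P_M(acc(δ_H(u·a))·v)`; in particular the
words `acc(δ_H(u))·a` and `acc(δ_H(u·a))` are inequivalent under `≡_{P_M}`,
witnessed by the distinguishing suffix `v`. -/
theorem counterexample_decomposition {S SH I O : Type*} [Fintype I] [Fintype O]
    (M : Mealy S I O) (H : Mealy SH I O) (acc : SH → List I)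
    (hacc0 : acc H.init = [])
    (haccout : ∀ (s : SH) (i : I), M.func (acc s ++ [i]) = some (H.out1 s i))
    (c : List I) (hc : c ≠ [])
    (hce : (H.outW H.init c).getLast? ≠ M.func c) :
    ∃ (u : List I) (a : I) (v : List I),
      c = u ++ a :: v ∧ v ≠ [] ∧
      M.func (acc (H.transW H.init u) ++ a :: v) ≠
        M.func (acc (H.transW H.init (u ++ [a])) ++ v) ∧
      ¬ M.funcEqv (acc (H.transW H.init u) ++ [a]) (acc (H.transW H.init (u ++ [a]))) := by
  obtain ⟨u, a, v, h1, h2, h3⟩ := decomp_aux M H acc haccout c H.init hc (by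
    rw [hacc0]; exact hce)
  refine ⟨u, a, v, h1, h2, h3, fun h => h3 ?_⟩
  have := h v (by simp)
  simpa using this
end
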